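/- Let d ≥ 1, r ≥ 1 and let 1 ≤ p, q ≤ ∞ satisfy 1/p + 1/q = log₂(2 + 2^r)/r. Then for every function f : ℤ^d → ℝ supported in {0,1}^d one has ‖f*f‖_{ℓ^r(ℤ^d)} ≤ ‖f‖_{ℓ^p(ℤ^d)} ‖f‖_{ℓ^q(ℤ^d)}. -/

import Mathlib

open scoped BigOperators ENNReal

/-- Convolution of two functions on `ℤ^d`. -/
noncomputable def cconv {d : ℕ} (f g : (Fin d → ℤ) → ℝ) : (Fin d → ℤ) → ℝ :=
  fun m => ∑' u : Fin d → ℤ, f u * g (m - u)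

/-- A point of `ℤ^d` lies in the hypercube `{0,1}^d`. -/
def InCube {d : ℕ} (x : Fin d → ℤ) : Prop := ∀ i, x i = 0 ∨ x i = 1

/-- A function on `ℤ^d` is supported in `{0,1}^d`. -/
def SupportedInCube {d : ℕ} (f : (Fin d → ℤ) → ℝ) : Prop :=
  ∀ x : Fin d → ℤ, ¬ InCube x → f x = 0

/-- The `ℓ^s` norm of a function on `ℤ^d` (for `0 < s < ∞`). -/
noncomputable def lnorm {d : ℕ} (s : ℝ) (f : (Fin d → ℤ) → ℝ) : ℝ :=
  (∑' x : Fin d → ℤ, |f x| ^ s) ^ (1 / s)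


/-- The `ℓ^s` norm for an extended exponent `s ∈ (0,∞]`:
for `s = ∞` it is the sup norm, otherwise the usual `ℓ^s` norm. -/
noncomputable def lnormE {d : ℕ} (s : ℝ≥0∞) (f : (Fin d → ℤ) → ℝ) : ℝ :=
  if s = ∞ then ⨆ x : Fin d → ℤ, |f x|
  else (∑' x : Fin d → ℤ, |f x| ^ s.toReal) ^ (1 / s.toReal)

/-!
For finitely supported `f`, Hölder's inequality gives `‖f‖_s ^ 2 ≤ ‖f‖_p * ‖f‖_q` when
`2 / s = 1 / p + 1 / q`, so it is enough to bound `‖f * g‖_r` by `‖f‖_s * ‖g‖_s` on the cube. This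
bound tensorises: the slices of `f * g` along the first coordinate are `f₀ * g₀`,
`f₀ * g₁ + f₁ * g₀` and `f₁ * g₁`, and Minkowski's inequality reduces dimension `d + 1` to
dimension `d` and the case of two points. Testing that case on the indicator of `{0, 1}` yields the
condition `2 + 2 ^ r ≤ 4 ^ (r / s)`, which is also sufficient: in logarithmic coordinates it asserts
`2 cosh (r u) + (2 cosh t) ^ r ≤ (2 cosh (s u) + 2 cosh (s t)) ^ (r / s)`, convexity of
`x ↦ x ^ (r / s)` separates `u` from `t`, and each half says that
`(2 cosh v) ^ (l m) - (2 cosh (l v)) ^ m` is smallest at `v = 0`.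
-/

section TwoPoint

open Real

theorem add_le_add_of_convexOn {S : Set ℝ} {φ : ℝ → ℝ} (hφ : ConvexOn ℝ S φ) {w x y z : ℝ}
    (hw : w ∈ S) (hz : z ∈ S) (hwx : w ≤ x) (hxz : x ≤ z) (hsum : x + y = w + z) :
    φ x + φ y ≤ φ w + φ z := by
  have hmem : x ∈ segment ℝ w z := by
    rw [segment_eq_Icc (hwx.trans hxz)]
    exact ⟨hwx, hxz⟩
  obtain ⟨α, β, hα, hβ, hαβ, hx⟩ := hmem
  have hy : β • w + α • z = y := by
    simp only [smul_eq_mul] at hx ⊢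
    linear_combination (w + z) * hαβ - hx - hsum
  have hφx := hφ.2 hw hz hα hβ hαβ
  have hφy := hφ.2 hw hz hβ hα (add_comm β α ▸ hαβ)
  rw [hx] at hφx
  rw [hy] at hφy
  simp only [smul_eq_mul] at hφx hφy
  linear_combination hφx + hφy + (φ w + φ z) * hαβ

theorem exp_add_exp (x y : ℝ) : exp x + exp y = exp ((x + y) / 2) * (2 * cosh ((x - y) / 2)) := by
  rw [cosh_eq, mul_div_cancel₀ _ two_ne_zero, mul_add, ← exp_add, ← exp_add]
  ring_nf

-- `rpow_sub_rpow_le` and `le_rpow_sub_rpow` are Jensen's inequality for `t ↦ t ^ (k - 1)` at the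
-- points `b` and `a + b` with these weights.
theorem div_smul_add_one_sub_div_smul {a : ℝ} (ha : a ≠ 0) (b : ℝ) :
    (b / a) • b + (1 - b / a) • (a + b) = a := by
  simp only [smul_eq_mul]
  field_simp
  ring

theorem rpow_sub_rpow_le {a b k : ℝ} (hb : 0 < b) (hab : b ≤ a) (hk : 2 ≤ k) :
    a ^ k - b ^ k ≤ (a - b) * (a + b) ^ (k - 1) := by
  have ha : 0 < a := hb.trans_le hab
  have jensen := (convexOn_rpow (p := k - 1) (by linarith)).2 hb.le (add_pos ha hb).le
    (div_nonneg hb.le ha.le) (sub_nonneg.2 (div_le_one_of_le₀ hab ha.le)) (add_sub_cancel _ _)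
  rw [div_smul_add_one_sub_div_smul ha.ne'] at jensen
  simp only [smul_eq_mul] at jensen
  have scaled := mul_le_mul_of_nonneg_left jensen ha.le
  rw [rpow_sub_one ha.ne', rpow_sub_one hb.ne'] at scaled
  field_simp at scaled
  linarith

theorem le_rpow_sub_rpow {a b k : ℝ} (hb : 0 < b) (hab : b ≤ a) (hk₁ : 1 ≤ k) (hk₂ : k ≤ 2) :
    (a - b) * (a + b) ^ (k - 1) ≤ a ^ k - b ^ k := by
  have ha : 0 < a := hb.trans_le hab
  have jensen := (concaveOn_rpow (p := k - 1) (by linarith) (by linarith)).2 hb.le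
    (add_pos ha hb).le (div_nonneg hb.le ha.le) (sub_nonneg.2 (div_le_one_of_le₀ hab ha.le))
    (add_sub_cancel _ _)
  rw [div_smul_add_one_sub_div_smul ha.ne'] at jensen
  simp only [smul_eq_mul] at jensen
  have scaled := mul_le_mul_of_nonneg_left jensen ha.le
  rw [rpow_sub_one ha.ne', rpow_sub_one hb.ne'] at scaled
  field_simp at scaled
  linarith

theorem two_mul_cosh_eq (v : ℝ) : 2 * cosh v = exp v + exp (-v) := by
  rw [cosh_eq]
  ring

theorem two_mul_sinh_mul_eq (k v : ℝ) : 2 * sinh (k * v) = exp v ^ k - exp (-v) ^ k := by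
  rw [sinh_eq, ← exp_mul, ← exp_mul]
  ring_nf

theorem two_mul_sinh_eq (v : ℝ) : 2 * sinh v = exp v - exp (-v) := by
  rw [sinh_eq]
  ring

theorem sinh_mul_le {k v : ℝ} (hk : 2 ≤ k) (hv : 0 ≤ v) :
    sinh (k * v) ≤ (2 * cosh v) ^ (k - 1) * sinh v := by
  have := rpow_sub_rpow_le (exp_pos (-v)) (exp_le_exp.2 (by linarith : -v ≤ v)) hk
  rw [← two_mul_cosh_eq, ← two_mul_sinh_eq, ← two_mul_sinh_mul_eq] at this
  linarith

theorem le_sinh_mul {k v : ℝ} (hk₁ : 1 ≤ k) (hk₂ : k ≤ 2) (hv : 0 ≤ v) :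
    (2 * cosh v) ^ (k - 1) * sinh v ≤ sinh (k * v) := by
  have := le_rpow_sub_rpow (exp_pos (-v)) (exp_le_exp.2 (by linarith : -v ≤ v)) hk₁ hk₂
  rw [← two_mul_cosh_eq, ← two_mul_sinh_eq, ← two_mul_sinh_mul_eq] at this
  linarith

theorem two_mul_cosh_mul_le {l : ℝ} (hl : 1 ≤ l) (v : ℝ) :
    2 * cosh (l * v) ≤ (2 * cosh v) ^ l := by
  have := add_rpow_le_rpow_add (exp_pos v).le (exp_pos (-v)).le hl
  rw [two_mul_cosh_eq, two_mul_cosh_eq]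
  convert this using 2 <;> rw [← exp_mul] <;> ring_nf

theorem two_mul_cosh_pos (v : ℝ) : 0 < 2 * cosh v := mul_pos two_pos (cosh_pos v)

theorem two_mul_cosh_mul_rpow_le {l c : ℝ} (hl : 1 ≤ l) (hc : 0 ≤ c) (v : ℝ) :
    (2 * cosh (l * v)) ^ c ≤ (2 * cosh v) ^ (l * c) := by
  rw [rpow_mul (two_mul_cosh_pos v).le]
  exact rpow_le_rpow (two_mul_cosh_pos _).le (two_mul_cosh_mul_le hl v) hc

theorem cosh_rpow_mul_sinh_le {l m v : ℝ} (hl : 1 ≤ l) (hm : 1 ≤ m) (hlm : 2 ≤ l * m)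
    (hv : 0 ≤ v) :
    (2 * cosh (l * v)) ^ (m - 1) * sinh (l * v) ≤ (2 * cosh v) ^ (l * m - 1) * sinh v := by
  have hl₀ : 0 < l := one_pos.trans_le hl
  rcases le_total 2 l with hl₂ | hl₂
  · calc (2 * cosh (l * v)) ^ (m - 1) * sinh (l * v)
        ≤ (2 * cosh v) ^ (l * (m - 1)) * ((2 * cosh v) ^ (l - 1) * sinh v) := by
          exact mul_le_mul (two_mul_cosh_mul_rpow_le hl (by linarith) v) (sinh_mul_le hl₂ hv)
            (sinh_nonneg_iff.2 (by positivity)) (rpow_nonneg (two_mul_cosh_pos v).le _)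
      _ = (2 * cosh v) ^ (l * m - 1) * sinh v := by
          rw [← mul_assoc, ← rpow_add (two_mul_cosh_pos v)]
          ring_nf
  · have hsinh_two : (2 * cosh (l * v)) ^ (2 / l - 1) * sinh (l * v) ≤ 2 * cosh v * sinh v := by
      have := le_sinh_mul (k := 2 / l) (v := l * v) ((one_le_div hl₀).2 hl₂)
        ((div_le_iff₀ hl₀).2 (by linarith)) (by positivity)
      rwa [← mul_assoc, div_mul_cancel₀ _ hl₀.ne', sinh_two_mul, mul_right_comm] at this
    calc (2 * cosh (l * v)) ^ (m - 1) * sinh (l * v)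
        = (2 * cosh (l * v)) ^ (m - 2 / l) * ((2 * cosh (l * v)) ^ (2 / l - 1) * sinh (l * v)) := by
          rw [← mul_assoc, ← rpow_add (two_mul_cosh_pos _)]
          ring_nf
      _ ≤ (2 * cosh v) ^ (l * (m - 2 / l)) * (2 * cosh v * sinh v) := by
          refine mul_le_mul (two_mul_cosh_mul_rpow_le hl ?_ v) hsinh_two
            (mul_nonneg (rpow_nonneg (two_mul_cosh_pos _).le _) (sinh_nonneg_iff.2 ?_))
            (rpow_nonneg (two_mul_cosh_pos v).le _)
          · exact sub_nonneg.2 ((div_le_iff₀ hl₀).2 (by linarith))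
          · positivity
      _ = (2 * cosh v) ^ (l * m - 1) * sinh v := by
          rw [← mul_assoc, ← rpow_add_one (two_mul_cosh_pos v).ne']
          congr 2
          field_simp
          ring

theorem cosh_mul_rpow_add_le {l m : ℝ} (hl : 1 ≤ l) (hm : 1 ≤ m) (hlm : 2 ≤ l * m) (v : ℝ) :
    (2 * cosh (l * v)) ^ m + (2 ^ (l * m) - 2 ^ m) ≤ (2 * cosh v) ^ (l * m) := by
  wlog hv : 0 ≤ v generalizing v
  · simpa using this (-v) (by linarith)
  let gap (x : ℝ) : ℝ := (2 * cosh x) ^ (l * m) - (2 * cosh (l * x)) ^ m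
  have hderiv (x : ℝ) : HasDerivAt gap (2 * sinh x * (l * m) * (2 * cosh x) ^ (l * m - 1) -
      2 * (sinh (l * x) * (l * 1)) * m * (2 * cosh (l * x)) ^ (m - 1)) x :=
    (((hasDerivAt_cosh x).const_mul 2).rpow_const (.inl (two_mul_cosh_pos x).ne')).sub
      (((((hasDerivAt_id x).const_mul l).cosh).const_mul 2).rpow_const
        (.inl (two_mul_cosh_pos _).ne'))
  have hmono : MonotoneOn gap (Set.Ici 0) := by
    refine monotoneOn_of_deriv_nonneg (convex_Ici 0)
      (fun x _ ↦ (hderiv x).continuousAt.continuousWithinAt)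
      (fun x _ ↦ (hderiv x).differentiableAt.differentiableWithinAt) fun x hx ↦ ?_
    rw [interior_Ici] at hx
    rw [(hderiv x).deriv]
    have := mul_le_mul_of_nonneg_left (cosh_rpow_mul_sinh_le hl hm hlm (le_of_lt hx))
      (by positivity : 0 ≤ 2 * (l * m))
    linarith
  have := hmono Set.self_mem_Ici (Set.mem_Ici.2 hv) hv
  simp only [gap, mul_zero, cosh_zero, mul_one] at this
  linarith

theorem two_add_two_mul_cosh_rpow (c w : ℝ) :
    (2 + 2 * cosh w) ^ c = (2 * cosh (w / 2)) ^ (2 * c) := by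
  have hsq : 2 + 2 * cosh w = (2 * cosh (w / 2)) ^ (2 : ℝ) := by
    have h := cosh_two_mul (w / 2)
    rw [mul_div_cancel₀ _ two_ne_zero] at h
    rw [rpow_two]
    linear_combination 2 * h - 2 * cosh_sq (w / 2)
  rw [hsq, ← rpow_mul (two_mul_cosh_pos _).le]

variable {r s : ℝ}

theorem le_of_two_add_two_rpow_le (hs : 0 < s) (hr : 1 ≤ r)
    (hrs : 2 + 2 ^ r ≤ (4 : ℝ) ^ (r / s)) : s ≤ r := by
  have htwo : (2 : ℝ) ≤ 2 ^ r := self_le_rpow_of_one_le one_le_two hr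
  have hpow : (4 : ℝ) ^ (1 : ℝ) ≤ 4 ^ (r / s) := by
    rw [rpow_one]
    linarith
  exact (one_le_div hs).1 ((rpow_le_rpow_left_iff (by norm_num)).1 hpow)

theorem four_rpow (c : ℝ) : (4 : ℝ) ^ c = 2 ^ (2 * c) := by
  rw [rpow_mul two_pos.le, rpow_two]
  norm_num

theorem lt_two_of_two_add_two_rpow_le (hs : 0 < s) (hr : 0 < r)
    (hrs : 2 + 2 ^ r ≤ (4 : ℝ) ^ (r / s)) : s < 2 := by
  rw [four_rpow] at hrs
  have hpow : (2 : ℝ) ^ r < 2 ^ (2 * (r / s)) := by linarith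
  have hexp := (rpow_lt_rpow_left_iff one_lt_two).1 hpow
  rw [mul_div_left_comm, lt_mul_iff_one_lt_right hr, one_lt_div hs] at hexp
  exact hexp

theorem two_mul_cosh_add_rpow_le (hs : 0 < s) (hr : 1 ≤ r)
    (hrs : 2 + 2 ^ r ≤ (4 : ℝ) ^ (r / s)) (u t : ℝ) :
    2 * cosh (r * u) + (2 * cosh t) ^ r ≤ (2 * cosh (s * u) + 2 * cosh (s * t)) ^ (r / s) := by
  have hsr : 1 ≤ r / s := (one_le_div hs).2 (le_of_two_add_two_rpow_le hs hr hrs)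
  have hs₂ : 1 ≤ 2 / s :=
    (one_le_div hs).2 (lt_two_of_two_add_two_rpow_le hs (by linarith) hrs).le
  have hu : 2 * cosh (r * u) + (4 ^ (r / s) - 2) ≤ (2 + 2 * cosh (s * u)) ^ (r / s) := by
    have := cosh_mul_rpow_add_le (l := 2 * (r / s)) (m := 1) (by linarith) le_rfl (by linarith)
      (s * u / 2)
    rw [mul_one, rpow_one, rpow_one, ← two_add_two_mul_cosh_rpow, ← four_rpow] at this
    convert this using 4
    field_simp
  have ht : (2 * cosh t) ^ r + (4 ^ (r / s) - 2 ^ r) ≤ (2 + 2 * cosh (s * t)) ^ (r / s) := by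
    have hexp : 2 / s * r = 2 * (r / s) := by ring
    have := cosh_mul_rpow_add_le (l := 2 / s) (m := r) hs₂ hr
      (by rw [hexp]; linarith) (s * t / 2)
    rw [hexp, ← two_add_two_mul_cosh_rpow, ← four_rpow] at this
    convert this using 4
    field_simp
  have hpair : (2 + 2 * cosh (s * u)) ^ (r / s) + (2 + 2 * cosh (s * t)) ^ (r / s) ≤
      4 ^ (r / s) + (2 * cosh (s * u) + 2 * cosh (s * t)) ^ (r / s) := by
    have hcu := one_le_cosh (s * u)
    have hct := one_le_cosh (s * t)
    exact add_le_add_of_convexOn (convexOn_rpow hsr) (Set.mem_Ici.2 (by norm_num))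
      (Set.mem_Ici.2 (by linarith)) (by linarith) (by linarith) (by ring)
  linarith

theorem two_point_young_of_pos (hs : 0 < s) (hr : 1 ≤ r) (hrs : 2 + 2 ^ r ≤ (4 : ℝ) ^ (r / s))
    {a b c d : ℝ} (ha : 0 < a) (hb : 0 < b) (hc : 0 < c) (hd : 0 < d) :
    (a * c) ^ r + (a * d + b * c) ^ r + (b * d) ^ r ≤
      ((a ^ s + b ^ s) * (c ^ s + d ^ s)) ^ (r / s) := by
  obtain ⟨A, rfl⟩ : ∃ A, exp A = a := ⟨log a, exp_log ha⟩
  obtain ⟨B, rfl⟩ : ∃ B, exp B = b := ⟨log b, exp_log hb⟩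
  obtain ⟨C, rfl⟩ : ∃ C, exp C = c := ⟨log c, exp_log hc⟩
  obtain ⟨D, rfl⟩ : ∃ D, exp D = d := ⟨log d, exp_log hd⟩
  set M := (A + B + C + D) / 2 with hM
  set u := (A + C - (B + D)) / 2 with hu
  set t := (A + D - (B + C)) / 2 with ht
  have houter (k : ℝ) :
      exp (k * (A + C)) + exp (k * (B + D)) = exp (k * M) * (2 * cosh (k * u)) := by
    rw [exp_add_exp, hM, hu]
    ring_nf
  have hinner (k : ℝ) :
      exp (k * (A + D)) + exp (k * (B + C)) = exp (k * M) * (2 * cosh (k * t)) := by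
    rw [exp_add_exp, hM, ht]
    ring_nf
  have hcosh (x : ℝ) := (two_mul_cosh_pos x).le
  calc (exp A * exp C) ^ r + (exp A * exp D + exp B * exp C) ^ r + (exp B * exp D) ^ r
      = exp (r * M) * (2 * cosh (r * u) + (2 * cosh t) ^ r) := by
        have h₁ := hinner 1
        simp only [one_mul] at h₁
        simp only [← exp_add]
        rw [h₁, mul_rpow (exp_pos M).le (hcosh t), mul_add, ← houter]
        simp only [← exp_mul]
        ring_nf
    _ ≤ exp (r * M) * (2 * cosh (s * u) + 2 * cosh (s * t)) ^ (r / s) :=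
        mul_le_mul_of_nonneg_left (two_mul_cosh_add_rpow_le hs hr hrs u t) (exp_pos _).le
    _ = (exp (s * M) * (2 * cosh (s * u) + 2 * cosh (s * t))) ^ (r / s) := by
        rw [mul_rpow (exp_pos _).le (add_nonneg (hcosh _) (hcosh _)), ← exp_mul]
        congr 2
        field_simp
    _ = ((exp A ^ s + exp B ^ s) * (exp C ^ s + exp D ^ s)) ^ (r / s) := by
        rw [mul_add, ← houter, ← hinner]
        simp only [← exp_mul, mul_add, add_mul, ← exp_add]
        ring_nf

theorem two_point_young (hs : 0 < s) (hr : 1 ≤ r) (hrs : 2 + 2 ^ r ≤ (4 : ℝ) ^ (r / s))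
    {a b c d : ℝ} (ha : 0 ≤ a) (hb : 0 ≤ b) (hc : 0 ≤ c) (hd : 0 ≤ d) :
    (a * c) ^ r + (a * d + b * c) ^ r + (b * d) ^ r ≤
      ((a ^ s + b ^ s) * (c ^ s + d ^ s)) ^ (r / s) := by
  have hs₀ : 0 ≤ s := hs.le
  have hr₀ : 0 ≤ r := by linarith
  have hrs₀ : 0 ≤ r / s := by positivity
  let lhs (ε : ℝ) : ℝ := ((a + ε) * (c + ε)) ^ r + ((a + ε) * (d + ε) + (b + ε) * (c + ε)) ^ r +
    ((b + ε) * (d + ε)) ^ r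
  let rhs (ε : ℝ) : ℝ := (((a + ε) ^ s + (b + ε) ^ s) * ((c + ε) ^ s + (d + ε) ^ s)) ^ (r / s)
  have hlhs : Continuous lhs := by fun_prop (disch := simp [*])
  have hrhs : Continuous rhs := by fun_prop (disch := simp [*])
  have hle : ∀ ε ∈ Set.Ioi (0 : ℝ), lhs ε ≤ rhs ε := fun ε (hε : 0 < ε) ↦
    two_point_young_of_pos hs hr hrs (by positivity) (by positivity) (by positivity)
      (by positivity)
  have h₀ : lhs 0 ≤ rhs 0 :=
    closure_minimal hle (isClosed_le hlhs hrhs) (by simp)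
  simpa [lhs, rhs] using h₀

end TwoPoint

section Norms

open MeasureTheory

variable {d : ℕ}

theorem eLpNorm'_count {α E : Type*} [MeasurableSpace α] [MeasurableSingletonClass α] [ENorm E]
    (f : α → E) (s : ℝ) : eLpNorm' f s .count = (∑' x, ‖f x‖ₑ ^ s) ^ (1 / s) := by
  rw [eLpNorm', lintegral_count]

theorem eLpNorm_ofReal_eq_eLpNorm' {α E : Type*} [MeasurableSpace α] {μ : Measure α} [ENorm E]
    {s : ℝ} (hs : 0 < s) (f : α → E) : eLpNorm f (ENNReal.ofReal s) μ = eLpNorm' f s μ := by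
  rw [eLpNorm_eq_eLpNorm' (by simpa using hs) ENNReal.ofReal_ne_top, ENNReal.toReal_ofReal hs.le]

theorem lnorm_eq_toReal_eLpNorm' {s : ℝ} (hs : 0 ≤ s) (f : (Fin d → ℤ) → ℝ) :
    lnorm s f = (eLpNorm' f s .count).toReal := by
  rw [eLpNorm'_count, ← ENNReal.toReal_rpow,
    ENNReal.tsum_toReal_eq fun x ↦ ENNReal.rpow_ne_top_of_nonneg hs enorm_ne_top]
  simp only [← ENNReal.toReal_rpow, toReal_enorm, Real.norm_eq_abs, lnorm]

theorem lnormE_eq_toReal_eLpNorm {p : ℝ≥0∞} (hp : p ≠ 0) (f : (Fin d → ℤ) → ℝ) :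
    lnormE p f = (eLpNorm f p .count).toReal := by
  rcases eq_or_ne p ∞ with rfl | hp_top
  · rw [eLpNorm_exponent_top, eLpNormEssSup_count, ENNReal.toReal_iSup fun x ↦ enorm_ne_top]
    simp only [toReal_enorm, Real.norm_eq_abs, lnormE, if_true]
  · rw [eLpNorm_eq_eLpNorm' hp hp_top, ← lnorm_eq_toReal_eLpNorm' ENNReal.toReal_nonneg, lnormE,
      if_neg hp_top, lnorm]

theorem eLpNorm_count_lt_top_of_finite_support {α E : Type*} [MeasurableSpace α]
    [MeasurableSingletonClass α] [NormedAddCommGroup E] {f : α → E} (hf : f.support.Finite)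
    (p : ℝ≥0∞) : eLpNorm f p .count < ∞ := by
  obtain ⟨C, hC⟩ := (hf.image fun x ↦ ‖f x‖).bddAbove
  rw [← eLpNorm_restrict_eq_of_support_subset subset_rfl]
  refine (eLpNorm_le_of_ae_bound (C := C) (ae_restrict_of_forall_mem hf.measurableSet
    fun x hx ↦ hC ⟨x, hx, rfl⟩)).trans_lt (ENNReal.mul_lt_top ?_ ENNReal.ofReal_lt_top)
  rw [Measure.restrict_apply_univ]
  exact ENNReal.rpow_lt_top_of_nonneg (by positivity) (Measure.count_apply_lt_top.2 hf).ne

theorem eLpNorm_two_mul_sq_le {α E : Type*} [MeasurableSpace α] {μ : Measure α}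
    [NormedAddCommGroup E] {f : α → E} (hf : AEStronglyMeasurable f μ) (p q r : ℝ≥0∞)
    [ENNReal.HolderTriple p q r] :
    eLpNorm f (r * 2) μ ^ 2 ≤ eLpNorm f p μ * eLpNorm f q μ := by
  have holder := eLpNorm_le_eLpNorm_mul_eLpNorm'_of_norm (p := p) (q := q) (r := r) hf hf
    (fun x y ↦ ‖x‖ * ‖y‖) 1 (.of_forall fun x ↦ by simp)
  have hsq := eLpNorm_norm_rpow (p := r) (μ := μ) f two_pos
  simp only [Real.rpow_two, sq, ENNReal.rpow_two, ENNReal.ofReal_ofNat] at hsq holder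
  rw [sq, ← hsq]
  simpa using holder

theorem lnorm_sq_le {f : (Fin d → ℤ) → ℝ} (hf : f.support.Finite) {s : ℝ} (hs : 0 < s)
    {p q : ℝ≥0∞} (hpq : 1 / p + 1 / q = ENNReal.ofReal (2 / s)) :
    lnorm s f ^ 2 ≤ lnormE p f * lnormE q f := by
  have hp : p ≠ 0 := by
    rintro rfl
    simp at hpq
  have hq : q ≠ 0 := by
    rintro rfl
    simp at hpq
  have : ENNReal.HolderTriple p q (ENNReal.ofReal (s / 2)) := ⟨by
    rw [← ENNReal.ofReal_inv_of_pos (half_pos hs), inv_div, ← hpq, one_div, one_div]⟩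
  have hle := eLpNorm_two_mul_sq_le (measurable_of_countable f).aestronglyMeasurable p q
    (ENNReal.ofReal (s / 2)) (μ := .count)
  have hexp : ENNReal.ofReal (s / 2) * 2 = ENNReal.ofReal s := by
    rw [← ENNReal.ofReal_ofNat, ← ENNReal.ofReal_mul (half_pos hs).le,
      div_mul_cancel₀ _ two_ne_zero]
  rw [hexp, eLpNorm_ofReal_eq_eLpNorm' hs] at hle
  rw [lnorm_eq_toReal_eLpNorm' hs.le, lnormE_eq_toReal_eLpNorm hp, lnormE_eq_toReal_eLpNorm hq,
    ← ENNReal.toReal_pow, ← ENNReal.toReal_mul]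
  exact ENNReal.toReal_mono (ENNReal.mul_ne_top
    (eLpNorm_count_lt_top_of_finite_support hf p).ne
    (eLpNorm_count_lt_top_of_finite_support hf q).ne) hle

end Norms

section Slice

open MeasureTheory

variable {d : ℕ}

theorem SupportedInCube.finite_support {f : (Fin d → ℤ) → ℝ} (hf : SupportedInCube f) :
    f.support.Finite := by
  refine (Set.Finite.pi' fun _ ↦ Set.toFinite ({0, 1} : Set ℤ)).subset fun x hx ↦ ?_
  exact not_not.1 (mt (hf x) hx)

theorem SupportedInCube.eLpNorm'_ne_top {f : (Fin d → ℤ) → ℝ} (hf : SupportedInCube f) {s : ℝ}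
    (hs : 0 < s) : eLpNorm' f s .count ≠ ∞ := by
  rw [← eLpNorm_ofReal_eq_eLpNorm' hs]
  exact (eLpNorm_count_lt_top_of_finite_support hf.finite_support _).ne

/-- The restriction of a function on `ℤ^(d+1)` to the hyperplane where the first coordinate is `a`,
as a function on `ℤ^d`. -/
def slice {E : Type*} (f : (Fin (d + 1) → ℤ) → E) (a : ℤ) : (Fin d → ℤ) → E :=
  fun y ↦ f (Fin.cons a y)

theorem supportedInCube_slice {f : (Fin (d + 1) → ℤ) → ℝ} (hf : SupportedInCube f) (a : ℤ) :
    SupportedInCube (slice f a) :=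
  fun y hy ↦ hf _ fun hcons ↦ hy fun i ↦ by simpa using hcons i.succ

theorem SupportedInCube.slice_eq_zero {f : (Fin (d + 1) → ℤ) → ℝ} (hf : SupportedInCube f) {a : ℤ}
    (ha₀ : a ≠ 0) (ha₁ : a ≠ 1) : slice f a = 0 :=
  funext fun y ↦ hf _ fun hcons ↦ by simpa [ha₀, ha₁] using hcons 0

theorem eLpNorm'_rpow_eq_tsum_slice {E : Type*} [ENorm E] {s : ℝ} (hs : 0 < s)
    (f : (Fin (d + 1) → ℤ) → E) :
    eLpNorm' f s .count ^ s = ∑' a, eLpNorm' (slice f a) s .count ^ s := by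
  simp only [← lintegral_rpow_enorm_eq_rpow_eLpNorm' hs, lintegral_count]
  rw [← (Fin.consEquiv fun _ ↦ ℤ).tsum_eq, ENNReal.tsum_prod']
  rfl

theorem slice_cconv_eq_tsum {f g : (Fin (d + 1) → ℤ) → ℝ} (hf : f.support.Finite) (m : ℤ) :
    slice (cconv f g) m = fun y ↦ ∑' a, cconv (slice f a) (slice g (m - a)) y := by
  funext y
  have hsum : Summable fun u ↦ f u * g (Fin.cons m y - u) :=
    summable_of_hasFiniteSupport (hf.subset (Function.support_mul_subset_left _ _))
  rw [← (Fin.consEquiv fun _ ↦ ℤ).summable_iff] at hsum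
  simp only [slice, cconv]
  rw [← (Fin.consEquiv fun _ ↦ ℤ).tsum_eq]
  refine (hsum.tsum_prod' hsum.prod_factor).trans <| tsum_congr fun a ↦ tsum_congr fun u ↦ ?_
  have hsub : (Fin.cons m y - Fin.cons a u : Fin (d + 1) → ℤ) = Fin.cons (m - a) (y - u) := by
    ext i
    cases i using Fin.cases <;> simp
  exact congrArg (f (Fin.cons a u) * g ·) hsub

@[simp]
theorem zero_cconv (g : (Fin d → ℤ) → ℝ) : cconv 0 g = 0 := by
  ext
  simp [cconv]

@[simp]
theorem cconv_zero (f : (Fin d → ℤ) → ℝ) : cconv f 0 = 0 := by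
  ext
  simp [cconv]

theorem SupportedInCube.slice_cconv {f g : (Fin (d + 1) → ℤ) → ℝ} (hf : SupportedInCube f)
    (m : ℤ) :
    slice (cconv f g) m = cconv (slice f 0) (slice g m) +
      cconv (slice f 1) (slice g (m - 1)) := by
  rw [slice_cconv_eq_tsum hf.finite_support]
  ext y
  rw [tsum_eq_sum (s := {0, 1}) fun a ha ↦ ?_, Finset.sum_pair zero_ne_one, sub_zero]
  · rfl
  · simp only [Finset.mem_insert, Finset.mem_singleton, not_or] at ha
    rw [hf.slice_eq_zero ha.1 ha.2, zero_cconv, Pi.zero_apply]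

theorem SupportedInCube.eLpNorm'_rpow_eq {f : (Fin (d + 1) → ℤ) → ℝ} (hf : SupportedInCube f)
    {s : ℝ} (hs : 0 < s) :
    eLpNorm' f s .count ^ s =
      eLpNorm' (slice f 0) s .count ^ s + eLpNorm' (slice f 1) s .count ^ s := by
  rw [eLpNorm'_rpow_eq_tsum_slice hs, tsum_eq_sum (s := {0, 1}) fun a ha ↦ ?_,
    Finset.sum_pair zero_ne_one]
  simp only [Finset.mem_insert, Finset.mem_singleton, not_or] at ha
  rw [hf.slice_eq_zero ha.1 ha.2, eLpNorm'_zero hs, ENNReal.zero_rpow_of_pos hs]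

theorem eLpNorm'_cconv_rpow_eq {f g : (Fin (d + 1) → ℤ) → ℝ} (hf : SupportedInCube f)
    (hg : SupportedInCube g) {r : ℝ} (hr : 0 < r) :
    eLpNorm' (cconv f g) r .count ^ r =
      eLpNorm' (cconv (slice f 0) (slice g 0)) r .count ^ r +
      eLpNorm' (cconv (slice f 0) (slice g 1) + cconv (slice f 1) (slice g 0)) r .count ^ r +
      eLpNorm' (cconv (slice f 1) (slice g 1)) r .count ^ r := by
  rw [eLpNorm'_rpow_eq_tsum_slice hr, tsum_eq_sum (s := {0, 1, 2}) fun m hm ↦ ?_,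
    Finset.sum_insert (by decide), Finset.sum_pair (by decide)]
  · simp only [hf.slice_cconv, sub_self, zero_sub, show (2 : ℤ) - 1 = 1 from rfl]
    rw [hg.slice_eq_zero (a := -1) (by decide) (by decide),
      hg.slice_eq_zero (a := 2) (by decide) (by decide), cconv_zero, cconv_zero, add_zero,
      zero_add, add_assoc]
  · simp only [Finset.mem_insert, Finset.mem_singleton, not_or] at hm
    rw [hf.slice_cconv, hg.slice_eq_zero hm.1 hm.2.1, hg.slice_eq_zero (by lia) (by lia),
      cconv_zero, cconv_zero, add_zero, eLpNorm'_zero hr, ENNReal.zero_rpow_of_pos hr]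

end Slice

section Young

open MeasureTheory

variable {d : ℕ} {r s : ℝ}

theorem two_point_young_ennreal (hs : 0 < s) (hr : 1 ≤ r)
    (hrs : 2 + 2 ^ r ≤ (4 : ℝ) ^ (r / s)) {a b c d : ℝ≥0∞} (ha : a ≠ ∞) (hb : b ≠ ∞) (hc : c ≠ ∞)
    (hd : d ≠ ∞) :
    (a * c) ^ r + (a * d + b * c) ^ r + (b * d) ^ r ≤
      ((a ^ s + b ^ s) * (c ^ s + d ^ s)) ^ (r / s) := by
  lift a to NNReal using ha
  lift b to NNReal using hb
  lift c to NNReal using hc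
  lift d to NNReal using hd
  have hs₀ : 0 ≤ s := hs.le
  have hr₀ : 0 ≤ r := by linarith
  have hrs₀ : 0 ≤ r / s := by positivity
  have := two_point_young hs hr hrs a.coe_nonneg b.coe_nonneg c.coe_nonneg d.coe_nonneg
  simp only [← ENNReal.coe_mul, ← ENNReal.coe_add, ← ENNReal.coe_rpow_of_nonneg _ hs₀,
    ← ENNReal.coe_rpow_of_nonneg _ hr₀, ← ENNReal.coe_rpow_of_nonneg _ hrs₀]
  exact_mod_cast this

theorem eLpNorm'_cconv_le_of_dim_zero {f g : (Fin 0 → ℤ) → ℝ} (hr : 0 < r) (hs : 0 < s) :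
    eLpNorm' (cconv f g) r .count ≤ eLpNorm' f s .count * eLpNorm' g s .count := by
  have hconv : cconv f g default = f default * g default := by
    rw [cconv, tsum_eq_single default fun u hu ↦ (hu (Subsingleton.elim _ _)).elim]
    congr 2
  have hnorm {t : ℝ} (ht : 0 < t) (h : (Fin 0 → ℤ) → ℝ) : eLpNorm' h t .count = ‖h default‖ₑ := by
    rw [eLpNorm'_count, tsum_eq_single default fun u hu ↦ (hu (Subsingleton.elim _ _)).elim,
      one_div, ENNReal.rpow_rpow_inv ht.ne']
  rw [hnorm hr, hnorm hs, hnorm hs, hconv, enorm_mul]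

theorem eLpNorm'_cconv_le (hs : 0 < s) (hr : 1 ≤ r) (hrs : 2 + 2 ^ r ≤ (4 : ℝ) ^ (r / s))
    {f g : (Fin d → ℤ) → ℝ} (hf : SupportedInCube f) (hg : SupportedInCube g) :
    eLpNorm' (cconv f g) r .count ≤ eLpNorm' f s .count * eLpNorm' g s .count := by
  have hr₀ : 0 < r := by linarith
  induction d with
  | zero => exact eLpNorm'_cconv_le_of_dim_zero hr₀ hs
  | succ d ih =>
    have young (i j : ℤ) := ih (supportedInCube_slice hf i) (supportedInCube_slice hg j)
    have minkowski := eLpNorm'_add_le (μ := .count) (q := r)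
      (measurable_of_countable (cconv (slice f 0) (slice g 1))).aestronglyMeasurable
      (measurable_of_countable (cconv (slice f 1) (slice g 0))).aestronglyMeasurable hr
    have finite {h : (Fin (d + 1) → ℤ) → ℝ} (hh : SupportedInCube h) (i : ℤ) :=
      (supportedInCube_slice hh i).eLpNorm'_ne_top hs
    rw [← ENNReal.rpow_le_rpow_iff hr₀, eLpNorm'_cconv_rpow_eq hf hg hr₀]
    calc _ ≤ (eLpNorm' (slice f 0) s .count * eLpNorm' (slice g 0) s .count) ^ r +
          (eLpNorm' (slice f 0) s .count * eLpNorm' (slice g 1) s .count +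
            eLpNorm' (slice f 1) s .count * eLpNorm' (slice g 0) s .count) ^ r +
          (eLpNorm' (slice f 1) s .count * eLpNorm' (slice g 1) s .count) ^ r := by
          gcongr
          · exact young 0 0
          · exact minkowski.trans (add_le_add (young 0 1) (young 1 0))
          · exact young 1 1
      _ ≤ ((eLpNorm' (slice f 0) s .count ^ s + eLpNorm' (slice f 1) s .count ^ s) *
          (eLpNorm' (slice g 0) s .count ^ s + eLpNorm' (slice g 1) s .count ^ s)) ^ (r / s) :=
        two_point_young_ennreal hs hr hrs (finite hf 0) (finite hf 1) (finite hg 0) (finite hg 1)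
      _ = (eLpNorm' f s .count * eLpNorm' g s .count) ^ r := by
        rw [← hf.eLpNorm'_rpow_eq hs, ← hg.eLpNorm'_rpow_eq hs,
          ← ENNReal.mul_rpow_of_nonneg _ _ hs.le, ← ENNReal.rpow_mul, mul_div_cancel₀ _ hs.ne']

theorem lnorm_cconv_le (hs : 0 < s) (hr : 1 ≤ r) (hrs : 2 + 2 ^ r ≤ (4 : ℝ) ^ (r / s))
    {f g : (Fin d → ℤ) → ℝ} (hf : SupportedInCube f) (hg : SupportedInCube g) :
    lnorm r (cconv f g) ≤ lnorm s f * lnorm s g := by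
  rw [lnorm_eq_toReal_eLpNorm' (by linarith), lnorm_eq_toReal_eLpNorm' hs.le,
    lnorm_eq_toReal_eLpNorm' hs.le, ← ENNReal.toReal_mul]
  exact ENNReal.toReal_mono (ENNReal.mul_ne_top (hf.eLpNorm'_ne_top hs) (hg.eLpNorm'_ne_top hs))
    (eLpNorm'_cconv_le hs hr hrs hf hg)

end Young

section CriticalExponent

open Real

theorem logb_two_add_two_rpow_pos (r : ℝ) : 0 < logb 2 (2 + 2 ^ r) :=
  logb_pos one_lt_two (by linarith [rpow_pos_of_pos two_pos r])

theorem two_add_two_rpow_le_of_logb_div_le {r x : ℝ} (hr : 0 < r)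
    (hx : logb 2 (2 + 2 ^ r) / r ≤ x) : 2 + 2 ^ r ≤ (4 : ℝ) ^ (r / (2 / x)) := by
  rw [four_rpow, ← logb_le_iff_le_rpow one_lt_two (by positivity),
    show 2 * (r / (2 / x)) = x * r by field_simp]
  exact (div_le_iff₀ hr).1 hx

end CriticalExponent

theorem young_hypercube_self_offdiagonal_general {d : ℕ} {r : ℝ} (hr : 1 ≤ r) {p q : ℝ≥0∞}
    (hp : p ≠ 0) (hq : q ≠ 0)
    (hpq : ENNReal.ofReal (Real.logb 2 (2 + 2 ^ r) / r) ≤ 1 / p + 1 / q)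
    {f : (Fin d → ℤ) → ℝ} (hf : SupportedInCube f) :
    lnorm r (cconv f f) ≤ lnormE p f * lnormE q f := by
  have hr₀ : 0 < r := one_pos.trans_le hr
  have hfin : 1 / p + 1 / q ≠ ∞ := by simp [hp, hq]
  set x := (1 / p + 1 / q).toReal with hx
  have hlogb : Real.logb 2 (2 + 2 ^ r) / r ≤ x := (ENNReal.ofReal_le_iff_le_toReal hfin).1 hpq
  have hs : 0 < 2 / x :=
    div_pos two_pos ((div_pos (logb_two_add_two_rpow_pos r) hr₀).trans_le hlogb)
  calc lnorm r (cconv f f)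
      ≤ lnorm (2 / x) f * lnorm (2 / x) f :=
        lnorm_cconv_le hs hr (two_add_two_rpow_le_of_logb_div_le hr₀ hlogb) hf hf
    _ = lnorm (2 / x) f ^ 2 := (sq _).symm
    _ ≤ lnormE p f * lnormE q f := lnorm_sq_le hf.finite_support hs
        (by rw [div_div_cancel₀ two_ne_zero, hx, ENNReal.ofReal_toReal hfin])

theorem young_hypercube_self_offdiagonal (d : ℕ) (hd : 1 ≤ d) (r : ℝ) (hr : 1 ≤ r)
    (p q : ℝ≥0∞) (hp : 1 ≤ p) (hq : 1 ≤ q)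
    (hpq : 1 / p + 1 / q = ENNReal.ofReal (Real.logb 2 (2 + 2 ^ r) / r))
    (f : (Fin d → ℤ) → ℝ) (hf : SupportedInCube f) :
    lnorm r (cconv f f) ≤ lnormE p f * lnormE q f :=
  young_hypercube_self_offdiagonal_general hr (one_pos.trans_le hp).ne' (one_pos.trans_le hq).ne'
    hpq.ge hf
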